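/- Let p be an odd prime, m ≥ 0 an integer, a an integer with 1 ≤ a ≤ p−1, and r an integer with a·p^m − 1 < r ≤ p^{m+1} − 2 and r ≡ a − 1 (mod p−1). Then p divides the binomial coefficient C(r, a·p^m − 1). -/

import Mathlib

/-!
Put `k = a * b ^ m - 1` for a base `b`, such as `b = p`. Since `b ^ m` divides the right-hand side
of `(r + 1) * C(r, k) = C(r + 1, k + 1) * (k + 1)`, coprimality of `b` and `C(r, k)` would force
`b ^ m ∣ r + 1`, say `r + 1 = b ^ m * c`. But then `c ≡ a [MOD b - 1]` because `b ≡ 1`, while the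
bounds on `r` give `0 < a < c < b`, which is impossible.
-/

theorem dvd_add_one_of_coprime_choose {d n k : ℕ} (hk : d ∣ k + 1)
    (hd : d.Coprime (n.choose k)) : d ∣ n + 1 := by
  apply hd.dvd_of_dvd_mul_right
  rw [Nat.add_one_mul_choose_eq]
  exact hk.mul_left _

theorem pow_mul_modEq_sub_one {b : ℕ} (hb : 0 < b) (m c : ℕ) :
    b ^ m * c ≡ c [MOD b - 1] := by
  have hb1 : b ≡ 1 [MOD b - 1] := Nat.modEq_sub hb
  simpa only [one_pow, one_mul] using (hb1.pow m).mul_right c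

theorem not_pow_dvd_of_modEq_sub_one {b m a n : ℕ} (ha : 0 < a) (han : a * b ^ m < n)
    (hnb : n < b ^ (m + 1)) (hmod : n ≡ a [MOD b - 1]) : ¬ b ^ m ∣ n := by
  rintro ⟨c, rfl⟩
  have hac : a < c := Nat.lt_of_mul_lt_mul_left (mul_comm a _ ▸ han)
  have hcb : c < b := Nat.lt_of_mul_lt_mul_left (pow_succ b m ▸ hnb)
  have hmod_c : a ≡ c [MOD b - 1] :=
    hmod.symm.trans (pow_mul_modEq_sub_one (by omega) m c)
  have hdvd : b - 1 ∣ c - a := (Nat.modEq_iff_dvd' hac.le).mp hmod_c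
  have hle : b - 1 ≤ c - a := Nat.le_of_dvd (Nat.sub_pos_of_lt hac) hdvd
  omega

theorem stmt16_general (b m a r : ℕ) (ha : 1 ≤ a)
    (hr1 : a * b ^ m - 1 < r) (hr2 : r ≤ b ^ (m + 1) - 2)
    (hmod : r ≡ a - 1 [MOD b - 1]) :
    ¬ b.Coprime (r.choose (a * b ^ m - 1)) := by
  intro hcop
  have hb : 0 < b := by
    by_contra! hb
    rw [Nat.le_zero.mp hb, zero_pow m.succ_ne_zero] at hr2
    omega
  have hpos : 0 < a * b ^ m := Nat.mul_pos ha (pow_pos hb m)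
  have hdvd_k : b ^ m ∣ a * b ^ m - 1 + 1 := by
    rw [Nat.sub_add_cancel hpos]
    exact dvd_mul_left _ _
  have hdvd_r : b ^ m ∣ r + 1 := dvd_add_one_of_coprime_choose hdvd_k (hcop.pow_left m)
  have hmod_succ : r + 1 ≡ a [MOD b - 1] := by
    simpa only [Nat.sub_add_cancel ha] using hmod.add_right 1
  exact not_pow_dvd_of_modEq_sub_one ha (by omega) (by omega) hmod_succ hdvd_r

/-- Let `p` be an odd prime, `m ≥ 0`, `1 ≤ a ≤ p-1`, and `r` with
`a·p^m - 1 < r ≤ p^{m+1} - 2` and `r ≡ a - 1 (mod p-1)`.  Then `p` divides the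
binomial coefficient `C(r, a·p^m - 1)`. -/
theorem stmt16 (p : ℕ) [Fact p.Prime] (hp : Odd p) (m a r : ℕ)
    (ha1 : 1 ≤ a) (ha2 : a ≤ p - 1)
    (hr1 : a * p ^ m - 1 < r) (hr2 : r ≤ p ^ (m + 1) - 2)
    (hmod : r ≡ a - 1 [MOD p - 1]) :
    p ∣ r.choose (a * p ^ m - 1) :=
  (Fact.out : p.Prime).dvd_iff_not_coprime.mpr (stmt16_general p m a r ha1 hr1 hr2 hmod)
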